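/- The abelianization map σ: (X*, 𝔑) → ([X], 𝔠) and the sorting map σ⁺: ([X], 𝔠) → (X*, 𝔑) are both order-preserving (monotone). Moreover, for every word p ∈ X*, it is never the case that σ⁺(σ(p)) <_𝔑 p; that is, the sorted version of p is never strictly below p in 𝔑. -/

import Mathlib

/-- A standard term order on the free monoid `X*` on the countable alphabet
`X = {x₁, x₂, …}`, whose words we represent as lists of positive integers
(the word `x_{i₁} ⋯ x_{i_d}` is the list `[i₁, …, i_d]`).  It is a strict
total order such that the empty word `1` is smallest, which is compatible
with two-sided multiplication (concatenation), and with `x₁ < x₂ < ⋯`. -/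
structure StdTermOrder where
  lt : List ℕ+ → List ℕ+ → Prop
  irrefl : ∀ a, ¬ lt a a
  trans : ∀ a b c, lt a b → lt b c → lt a c
  total : ∀ a b, a ≠ b → lt a b ∨ lt b a
  one_lt : ∀ t, t ≠ [] → lt [] t
  mul_lt : ∀ a b s t, lt s t → lt (a ++ s ++ b) (a ++ t ++ b)
  std : ∀ i j : ℕ+, i < j → lt [i] [j]

/-- The partial order `𝔑`, the intersection of all standard term orders:
`m ≤_𝔑 m'` iff `m ≤ m'` holds for every standard term order on `X*`. -/
def Nle (m m' : List ℕ+) : Prop := ∀ T : StdTermOrder, m = m' ∨ T.lt m m'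

/-- The strict version of `𝔑`. -/
def Nlt (m m' : List ℕ+) : Prop := Nle m m' ∧ m ≠ m'

/-- `m'` covers `m` in the partial order `𝔑`. -/
def NCovers (m m' : List ℕ+) : Prop :=
  Nlt m m' ∧ ∀ k, Nlt m k → ¬ Nlt k m'

/-- A standard term order on the free abelian monoid `[X]`, whose elements we
represent as finitely supported functions `ℕ+ →₀ ℕ` (exponent vectors): a
strict total order with `1` (i.e. `0`) smallest, compatible with
multiplication (addition of exponent vectors), and with `x₁ < x₂ < ⋯`. -/
structure CStdTermOrder where
  lt : (ℕ+ →₀ ℕ) → (ℕ+ →₀ ℕ) → Prop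
  irrefl : ∀ a, ¬ lt a a
  trans : ∀ a b c, lt a b → lt b c → lt a c
  total : ∀ a b, a ≠ b → lt a b ∨ lt b a
  one_lt : ∀ t, t ≠ 0 → lt 0 t
  mul_lt : ∀ t s s', lt s s' → lt (t + s) (t + s')
  std : ∀ i j : ℕ+, i < j → lt (Finsupp.single i 1) (Finsupp.single j 1)

/-- The partial order `𝔠` on `[X]`, the intersection of all standard term
orders on `[X]`. -/
def Cle (a b : ℕ+ →₀ ℕ) : Prop := ∀ T : CStdTermOrder, a = b ∨ T.lt a b

/-- The abelianization map `σ : X* → [X]`, recording for each `i` the number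
of occurrences of the letter `xᵢ`. -/
noncomputable def sigmaAb : List ℕ+ → (ℕ+ →₀ ℕ)
  | [] => 0
  | a :: t => Finsupp.single a 1 + sigmaAb t

/-- The sorting map `σ⁺ : [X] → X*`, sending `x₁^{a₁} ⋯ x_ℓ^{a_ℓ}` to the
weakly increasing word `x₁^{a₁} ⋯ x_ℓ^{a_ℓ}`. -/
def sigmaPlus (f : ℕ+ →₀ ℕ) : List ℕ+ :=
  (f.support.sort (· ≤ ·)).foldr (fun a l => List.replicate (f a) a ++ l) []

/-!
Weighting monomials by an additive `w` that increases along the alphabet and breaking ties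
colexicographically gives a term order on `[X]`; hence `a ≤_𝔠 b` forces `b` to have, for every `k`,
at least as many letters of index `≥ k` as `a`. Matching the letters of the two sorted words from
the right, the word `σ⁺(b)` then arises from `σ⁺(a)` by inserting letters and raising indices, and
both operations increase a word in every term order on `X*`.

In the other direction, a term order on `[X]` lifts to `X*` by comparing abelianizations first.
Breaking the remaining ties by the reversed lexicographic order puts the sorted word above all its
rearrangements.
-/

theorem append_lt_append_right_of_length_eq {α : Type*} [LT α] {s t : List α}
    (h : s < t) (hlen : s.length = t.length) (b : List α) : s ++ b < t ++ b := by
  induction h with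
  | nil => cases hlen
  | rel hxy => exact List.Lex.rel hxy
  | cons _ ih => exact List.Lex.cons (ih (Nat.succ.inj hlen))

theorem le_of_perm_of_sortedLE {α : Type*} [LinearOrder α] {s p : List α} (hs : s.SortedLE)
    (h : s.Perm p) : s ≤ p := by
  induction s generalizing p with
  | nil => rw [h.nil_eq]
  | cons x s ih =>
    cases p with
    | nil => exact absurd h.eq_nil (List.cons_ne_nil x s)
    | cons y p =>
      have hxs : ∀ z ∈ s, x ≤ z := (List.pairwise_cons.mp hs.pairwise).1
      have hxy : x ≤ y := by
        rcases List.mem_cons.mp (h.mem_iff.mpr List.mem_cons_self) with rfl | hy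
        · exact le_rfl
        · exact hxs y hy
      refine not_lt.mp fun hlt => ?_
      rcases List.cons_lt_cons_iff.mp hlt with hyx | ⟨rfl, hps⟩
      · exact hxy.not_gt hyx
      · exact (ih hs.pairwise.of_cons.sortedLE h.cons_inv).not_gt hps

theorem sublistForall₂_reverse {α β : Type*} {R : α → β → Prop} {l : List α} {l' : List β}
    (h : List.SublistForall₂ R l l') : List.SublistForall₂ R l.reverse l'.reverse := by
  obtain ⟨m, hlm, hml⟩ := List.sublistForall₂_iff.mp h
  exact List.sublistForall₂_iff.mpr ⟨m.reverse, List.rel_reverse hlm, hml.reverse⟩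

theorem sublistForall₂_of_sortedGE_of_countP_le {α : Type*} [Preorder α] [DecidableLE α]
    {l l' : List α} (hl : l.SortedGE) (hl' : l'.SortedGE)
    (h : ∀ k, l.countP (k ≤ ·) ≤ l'.countP (k ≤ ·)) :
    List.SublistForall₂ (· ≤ ·) l l' := by
  induction l generalizing l' with
  | nil => exact .nil
  | cons x t ih =>
    have ht : ∀ z ∈ t, z ≤ x := (List.pairwise_cons.mp hl.pairwise).1
    obtain ⟨z, hz, hxz⟩ : ∃ z ∈ l', x ≤ z := by
      have hpos : 0 < (x :: t).countP (x ≤ ·) :=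
        List.countP_pos_iff.mpr ⟨x, List.mem_cons_self, decide_eq_true le_rfl⟩
      simpa only [List.countP_pos_iff, decide_eq_true_eq] using hpos.trans_le (h x)
    cases l' with
    | nil => cases hz
    | cons y t' =>
      have hxy : x ≤ y := by
        rcases List.mem_cons.mp hz with rfl | hz
        · exact hxz
        · exact hxz.trans ((List.pairwise_cons.mp hl'.pairwise).1 z hz)
      refine .cons hxy (ih hl.pairwise.of_cons.sortedGE hl'.pairwise.of_cons.sortedGE
        fun k => ?_)
      by_cases hkx : k ≤ x
      · have hky : k ≤ y := hkx.trans hxy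
        simpa only [List.countP_cons, hkx, hky, decide_true, if_true, add_le_add_iff_right]
          using h k
      · have no_large : t.countP (k ≤ ·) = 0 := by
          simp only [List.countP_eq_zero, decide_eq_true_eq]
          exact fun z hz hkz => hkx (hkz.trans (ht z hz))
        exact no_large ▸ Nat.zero_le _

theorem sigmaAb_apply (l : List ℕ+) (i : ℕ+) : sigmaAb l i = l.count i := by
  induction l with
  | nil => rfl
  | cons a t ih =>
    rw [sigmaAb, Finsupp.add_apply, ih, Finsupp.single_apply, List.count_cons, add_comm]
    simp only [beq_iff_eq]

theorem sigmaAb_append (l l' : List ℕ+) : sigmaAb (l ++ l') = sigmaAb l + sigmaAb l' := by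
  ext i
  simp only [sigmaAb_apply, Finsupp.add_apply, List.count_append]

theorem sigmaAb_eq_iff_perm {l l' : List ℕ+} : sigmaAb l = sigmaAb l' ↔ l.Perm l' := by
  simp only [DFunLike.ext_iff, sigmaAb_apply, List.perm_iff_count]

theorem toMultiset_sigmaAb (l : List ℕ+) : Finsupp.toMultiset (sigmaAb l) = (l : Multiset ℕ+) := by
  ext i
  rw [Finsupp.count_toMultiset, sigmaAb_apply, Multiset.coe_count]

theorem sigmaPlus_eq_flatMap (f : ℕ+ →₀ ℕ) :
    sigmaPlus f = (f.support.sort (· ≤ ·)).flatMap fun i => List.replicate (f i) i := by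
  rw [sigmaPlus]
  induction f.support.sort (· ≤ ·) with
  | nil => rfl
  | cons i L ih => rw [List.foldr_cons, ih, List.flatMap_cons]

theorem sortedLE_sigmaPlus (f : ℕ+ →₀ ℕ) : (sigmaPlus f).SortedLE := by
  rw [sigmaPlus_eq_flatMap, List.sortedLE_iff_pairwise, List.pairwise_flatMap]
  refine ⟨fun i _ => List.pairwise_replicate.mpr (Or.inr le_rfl),
    (Finset.pairwise_sort _ _).imp fun hij x hx y hy => ?_⟩
  rwa [List.eq_of_mem_replicate hx, List.eq_of_mem_replicate hy]

theorem coe_sigmaPlus (f : ℕ+ →₀ ℕ) : (sigmaPlus f : Multiset ℕ+) = Finsupp.toMultiset f := by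
  rw [sigmaPlus_eq_flatMap, ← Multiset.coe_bind, Finset.sort_eq]
  simp only [Finsupp.toMultiset_apply, Finsupp.sum, Multiset.bind, Multiset.join,
    Multiset.nsmul_singleton, Multiset.coe_replicate, Finset.sum]

theorem sigmaAb_sigmaPlus (f : ℕ+ →₀ ℕ) : sigmaAb (sigmaPlus f) = f := by
  ext i
  rw [sigmaAb_apply, ← Multiset.coe_count, coe_sigmaPlus, Finsupp.count_toMultiset]

theorem sigmaPlus_sigmaAb_perm (p : List ℕ+) : (sigmaPlus (sigmaAb p)).Perm p :=
  sigmaAb_eq_iff_perm.mp (sigmaAb_sigmaPlus _)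

namespace CStdTermOrder

/-- The standard term order on `[X]` that compares the weights `w` first and breaks ties
colexicographically. -/
def ofWeight (w : (ℕ+ →₀ ℕ) →+ ℕ) (hw : Monotone fun i => w (Finsupp.single i 1)) :
    CStdTermOrder where
  lt a b := toLex (w a, toColex a) < toLex (w b, toColex b)
  irrefl _ := lt_irrefl _
  trans _ _ _ := lt_trans
  total a b hab := lt_or_gt_of_ne fun h =>
    hab (toColex.injective (Prod.mk.inj (toLex.injective h)).2)
  one_lt t ht := by
    rw [Prod.Lex.toLex_lt_toLex', map_zero]
    exact ⟨Nat.zero_le _, fun _ => (Finsupp.toColex_monotone zero_le).lt_of_ne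
      fun h => ht (toColex.injective h).symm⟩
  mul_lt t s s' h := by
    rw [map_add w, map_add w]
    exact add_lt_add_right h (toLex (w t, toColex t))
  std i j hij := Prod.Lex.toLex_lt_toLex'.mpr
    ⟨hw hij.le, fun _ => Finsupp.Colex.single_strictMono hij⟩

noncomputable instance : Inhabited CStdTermOrder := ⟨ofWeight 0 monotone_const⟩

end CStdTermOrder

theorem Cle.weight_le {a b : ℕ+ →₀ ℕ} (h : Cle a b) (w : (ℕ+ →₀ ℕ) →+ ℕ)
    (hw : Monotone fun i => w (Finsupp.single i 1)) : w a ≤ w b := by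
  rcases h (CStdTermOrder.ofWeight w hw) with rfl | hlt
  · exact le_rfl
  · exact (Prod.Lex.toLex_lt_toLex'.mp hlt).1

theorem Cle.countP_le {l l' : List ℕ+} (h : Cle (sigmaAb l) (sigmaAb l')) (k : ℕ+) :
    l.countP (k ≤ ·) ≤ l'.countP (k ≤ ·) := by
  let w := (Multiset.countPAddMonoidHom (k ≤ ·)).comp Finsupp.toMultiset
  have w_sigmaAb (m : List ℕ+) : w (sigmaAb m) = m.countP (k ≤ ·) :=
    (congrArg _ (toMultiset_sigmaAb m)).trans (Multiset.coe_countP _ m)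
  have w_single (i : ℕ+) : w (Finsupp.single i 1) = if k ≤ i then 1 else 0 := by
    simpa only [sigmaAb, add_zero, List.countP_singleton, decide_eq_true_eq] using w_sigmaAb [i]
  have hw : Monotone fun i => w (Finsupp.single i 1) := by
    intro i j hij
    simp only [w_single]
    split_ifs with hi hj
    · exact le_rfl
    · exact absurd (hi.trans hij) hj
    · exact zero_le_one
    · exact le_rfl
  simpa only [w_sigmaAb] using h.weight_le w hw

namespace CStdTermOrder

/-- The standard term order on `X*` that compares abelianizations by `T` and breaks ties by the
reversed lexicographic order; the reversal makes the sorted word the largest among its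
rearrangements. -/
def lift (T : CStdTermOrder) : StdTermOrder where
  lt s t := T.lt (sigmaAb s) (sigmaAb t) ∨ sigmaAb s = sigmaAb t ∧ t < s
  irrefl := by
    rintro a (h | ⟨-, h⟩)
    · exact T.irrefl _ h
    · exact lt_irrefl _ h
  trans := by
    rintro a b c (hab | ⟨hab, hba⟩) (hbc | ⟨hbc, hcb⟩)
    · exact Or.inl (T.trans _ _ _ hab hbc)
    · exact Or.inl (hbc ▸ hab)
    · exact Or.inl (hab ▸ hbc)
    · exact Or.inr ⟨hab.trans hbc, hcb.trans hba⟩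
  total a b hab := by
    by_cases hσ : sigmaAb a = sigmaAb b
    · exact hab.lt_or_gt.symm.imp (Or.inr ⟨hσ, ·⟩) (Or.inr ⟨hσ.symm, ·⟩)
    · exact (T.total _ _ hσ).imp Or.inl Or.inl
  one_lt t ht :=
    Or.inl (T.one_lt _ fun hσ => ht (sigmaAb_eq_iff_perm (l' := []).mp hσ).eq_nil)
  mul_lt a b s t h := by
    have sigmaAb_context (u : List ℕ+) :
        sigmaAb (a ++ u ++ b) = sigmaAb a + sigmaAb b + sigmaAb u := by
      rw [sigmaAb_append, sigmaAb_append, add_right_comm]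
    rw [sigmaAb_context, sigmaAb_context]
    rcases h with h | ⟨hσ, hts⟩
    · exact Or.inl (T.mul_lt _ _ _ h)
    · have hlen : t.length = s.length := (sigmaAb_eq_iff_perm.mp hσ).length_eq.symm
      rw [List.append_assoc, List.append_assoc]
      exact Or.inr ⟨by rw [hσ],
        List.append_left_lt (append_lt_append_right_of_length_eq hts hlen b)⟩
  std i j hij := Or.inl (by simpa only [sigmaAb, add_zero] using T.std i j hij)

end CStdTermOrder

theorem Nle.cle_sigmaAb {m m' : List ℕ+} (h : Nle m m') : Cle (sigmaAb m) (sigmaAb m') := by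
  intro T
  rcases h T.lift with rfl | hlt | ⟨hσ, -⟩
  · exact Or.inl rfl
  · exact Or.inr hlt
  · exact Or.inl hσ

theorem Nle.trans {m₁ m₂ m₃ : List ℕ+} (h₁ : Nle m₁ m₂) (h₂ : Nle m₂ m₃) : Nle m₁ m₃ := by
  intro T
  rcases h₁ T with rfl | h₁₂
  · exact h₂ T
  · rcases h₂ T with rfl | h₂₃
    · exact Or.inr h₁₂
    · exact Or.inr (T.trans _ _ _ h₁₂ h₂₃)

theorem Nle.append_append {s t : List ℕ+} (h : Nle s t) (a b : List ℕ+) :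
    Nle (a ++ s ++ b) (a ++ t ++ b) :=
  fun T => (h T).imp (fun hst => by rw [hst]) (T.mul_lt a b s t)

theorem nil_nle (m : List ℕ+) : Nle [] m :=
  fun T => (eq_or_ne [] m).imp_right fun hm => T.one_lt m hm.symm

theorem singleton_nle_singleton {i j : ℕ+} (h : i ≤ j) : Nle [i] [j] :=
  fun T => h.eq_or_lt.imp (congrArg fun x => [x]) (T.std i j)

theorem nle_of_sublistForall₂ {m m' : List ℕ+} (h : List.SublistForall₂ (· ≤ ·) m m') :
    Nle m m' := by
  induction h with
  | nil => exact nil_nle _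
  | @cons i j l l' hij _ ih =>
    have raise_tail : Nle (i :: l) (i :: l') := by
      simpa only [List.append_nil, List.singleton_append] using ih.append_append [i] []
    have raise_head : Nle (i :: l') (j :: l') :=
      (singleton_nle_singleton hij).append_append [] l'
    exact raise_tail.trans raise_head
  | @cons_right j l l' _ ih =>
    have insert_head : Nle l' (j :: l') := (nil_nle [j]).append_append [] l'
    exact ih.trans insert_head

theorem Cle.nle_sigmaPlus {a b : ℕ+ →₀ ℕ} (h : Cle a b) : Nle (sigmaPlus a) (sigmaPlus b) := by
  rw [← sigmaAb_sigmaPlus a, ← sigmaAb_sigmaPlus b] at h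
  have dominated : List.SublistForall₂ (· ≤ ·) (sigmaPlus a).reverse (sigmaPlus b).reverse :=
    sublistForall₂_of_sortedGE_of_countP_le (sortedLE_sigmaPlus a).reverse
      (sortedLE_sigmaPlus b).reverse
      fun k => by simpa only [List.countP_reverse] using h.countP_le k
  simpa only [List.reverse_reverse] using nle_of_sublistForall₂ (sublistForall₂_reverse dominated)

theorem not_nlt_sigmaPlus_sigmaAb (p : List ℕ+) : ¬ Nlt (sigmaPlus (sigmaAb p)) p := by
  rintro ⟨hle, hne⟩
  have hσ : sigmaAb (sigmaPlus (sigmaAb p)) = sigmaAb p := sigmaAb_sigmaPlus _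
  have hlex : sigmaPlus (sigmaAb p) ≤ p :=
    le_of_perm_of_sortedLE (sortedLE_sigmaPlus _) (sigmaPlus_sigmaAb_perm p)
  let T : CStdTermOrder := default
  rcases hle T.lift with heq | hlt | ⟨-, hlt⟩
  · exact hne heq
  · exact T.irrefl _ (hσ ▸ hlt)
  · exact hlex.not_gt hlt

/-- `σ` and `σ⁺` are monotone with respect to `𝔑` and `𝔠`, and the sorted
version `σ⁺(σ(p))` of a word `p` is never strictly below `p` in `𝔑`. -/
theorem stmt14 :
    (∀ m m' : List ℕ+, Nle m m' → Cle (sigmaAb m) (sigmaAb m')) ∧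
    (∀ a b : ℕ+ →₀ ℕ, Cle a b → Nle (sigmaPlus a) (sigmaPlus b)) ∧
    (∀ p : List ℕ+, ¬ Nlt (sigmaPlus (sigmaAb p)) p) := by
  exact ⟨fun _ _ => Nle.cle_sigmaAb, fun _ _ => Cle.nle_sigmaPlus, not_nlt_sigmaPlus_sigmaAb⟩
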